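/- arXiv:2308.12702 — 2 statements merged into one kernel-verified Lean document; each statement's English description precedes it below -/
import Mathlib

section
/- Let 1 < 2k ≤ n, and let n − k = Σ_i a_i 2^i and n − 2k + 1 = Σ_i b_i 2^i be the binary expansions (a_i, b_i ∈ {0,1}). If for every index i with b_i = 1 one also has a_i = 1, then N_F(n, 2k) = n − 2k + 1; otherwise N_F(n, 2k) > n − 2k + 1. -/
/-- `N_F(n, 2k)`: the minimum `j` with `n - 2k < j ≤ n` such that `C(k + j - 1, j)` is odd.
Here the second argument is `k` (so `NF n k` is the paper's `N_F(n, 2k)`). -/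
noncomputable def NF (n k : ℕ) : ℕ :=
  sInf {j : ℕ | n - 2 * k < j ∧ j ≤ n ∧ Odd (Nat.choose (k + j - 1) j)}

theorem odd_choose_aux (r : ℕ) : ∀ N : ℕ, Odd (Nat.choose N r) ↔
    ∀ i, r.testBit i = true → N.testBit i = true := by
  induction r using Nat.strong_induction_on with
  | _ r ih =>
    intro N
    rcases Nat.eq_zero_or_pos r with rfl | hr
    · simp
    have hL := Choose.choose_modEq_choose_mod_mul_choose_div_nat (n := N) (k := r) (p := 2)
    have h3 : Odd (N.choose r) ↔ Odd ((N % 2).choose (r % 2) * (N / 2).choose (r / 2)) := by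
      rw [Nat.odd_iff, Nat.odd_iff, hL]
    rw [h3, Nat.odd_mul, ih (r / 2) (by omega) (N / 2)]
    have h4 : Odd ((N % 2).choose (r % 2)) ↔ (r.testBit 0 = true → N.testBit 0 = true) := by
      rcases Nat.mod_two_eq_zero_or_one N with h | h <;>
      rcases Nat.mod_two_eq_zero_or_one r with h' | h' <;> simp [h, h']
    rw [h4]
    constructor
    · rintro ⟨h0, hs⟩ i
      cases i with
      | zero => exact h0
      | succ i => simpa [Nat.testBit_succ] using hs i
    · intro h
      exact ⟨h 0, fun i => by simpa [Nat.testBit_succ] using h (i + 1)⟩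

theorem exists_pow_aux (k : ℕ) (hk : 0 < k) : ∃ m, k ≤ 2 ^ m ∧ 2 ^ m ≤ 2 * k := by
  refine ⟨Nat.log 2 k + 1, (Nat.lt_pow_succ_log_self (by norm_num) k).le, ?_⟩
  have := Nat.pow_log_le_self 2 hk.ne'
  rw [pow_succ]; omega

/-- Let `1 < 2k ≤ n`. If every binary digit `1` of `n - 2k + 1` is also a binary digit `1`
of `n - k`, then `N_F(n, 2k) = n - 2k + 1`; otherwise `N_F(n, 2k) > n - 2k + 1`. -/
theorem NF_min_value (n k : ℕ) (h1 : 1 < 2 * k) (h2 : 2 * k ≤ n) :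
    ((∀ i, (n - 2 * k + 1).testBit i = true → (n - k).testBit i = true) →
        NF n k = n - 2 * k + 1) ∧
    ((¬ ∀ i, (n - 2 * k + 1).testBit i = true → (n - k).testBit i = true) →
        NF n k > n - 2 * k + 1) := by
  have e : k + (n - 2 * k + 1) - 1 = n - k := by omega
  have hodd := odd_choose_aux (n - 2 * k + 1) (n - k)
  constructor
  · intro h
    apply le_antisymm
    · apply Nat.sInf_le
      refine ⟨by omega, by omega, ?_⟩
      rw [e]
      exact hodd.2 h
    · refine le_csInf ⟨n - 2 * k + 1, by omega, by omega, ?_⟩ fun j hj => hj.1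
      rw [e]
      exact hodd.2 h
  · intro h
    obtain ⟨m, hm1, hm2⟩ := exists_pow_aux k (by omega)
    have hne : {j : ℕ | n - 2 * k < j ∧ j ≤ n ∧ Odd (Nat.choose (k + j - 1) j)}.Nonempty := by
      have hd := Nat.div_add_mod n (2 ^ m)
      have hl := Nat.mod_lt n (Nat.two_pow_pos m)
      refine ⟨2 ^ m * (n / 2 ^ m), by omega, by omega, ?_⟩
      rw [odd_choose_aux]
      intro i hi
      have e2 : k + 2 ^ m * (n / 2 ^ m) - 1 = 2 ^ m * (n / 2 ^ m) + (k - 1) := by omega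
      rw [e2, Nat.testBit_two_pow_mul_add _ (by omega)]
      rw [Nat.testBit_two_pow_mul] at hi
      simp only [Bool.and_eq_true, decide_eq_true_eq, ge_iff_le] at hi
      rw [if_neg (by omega)]
      exact hi.2
    have hmem := Nat.sInf_mem hne
    change NF n k ∈ _ at hmem
    obtain ⟨ha, hb, hc⟩ := hmem
    rcases Nat.lt_or_ge (n - 2 * k + 1) (NF n k) with h' | h'
    · exact h'
    · exfalso
      have h5 : NF n k = n - 2 * k + 1 := by omega
      rw [h5, e] at hc
      exact h (hodd.1 hc)
end

section
/- Let r > 0 and let k = 1 + Σ_{i=0}^{r-1} 2^i + Σ_{i=r+1}^{s} a_i 2^i with each a_i ∈ {0,1} (i.e., the binary expansion of k − 1 has digit 1 in every position 0, …, r−1 and digit 0 in position r). Then the binomial coefficient C(k + 2^r − 1, 2^r) is odd and C(k + j − 1, j) is even for every j with 1 ≤ j < 2^r; consequently, for every n with n − 2k < 2^r ≤ n, N_F(n, 2k) = 2^r. -/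
theorem odd_aux (q : ℕ) (hq : Odd q) (r : ℕ) :
    Odd (Nat.choose (2 ^ r * q + 2 ^ r - 1) (2 ^ r)) := by
  induction r with
  | zero => simpa using hq
  | succ r ih =>
    haveI : Fact (Nat.Prime 2) := ⟨Nat.prime_two⟩
    have h := Choose.choose_modEq_choose_mod_mul_choose_div_nat
      (n := 2 ^ (r + 1) * q + 2 ^ (r + 1) - 1) (k := 2 ^ (r + 1)) (p := 2)
    have hp : 0 < 2 ^ r := by positivity
    have e : 2 ^ (r + 1) * q = 2 * (2 ^ r * q) := by ring
    have e2 : 2 ^ (r + 1) = 2 * 2 ^ r := by ring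
    have h1 : (2 ^ (r + 1) * q + 2 ^ (r + 1) - 1) / 2 = 2 ^ r * q + 2 ^ r - 1 := by
      rw [e, e2]; omega
    have h2 : 2 ^ (r + 1) % 2 = 0 := by omega
    have h3 : 2 ^ (r + 1) / 2 = 2 ^ r := by omega
    rw [h1, h2, h3, Nat.choose_zero_right, one_mul] at h
    rw [Nat.odd_iff] at ih ⊢
    exact Eq.trans h ih

theorem even_aux (r k j : ℕ) (hk : 2 ^ r ∣ k) (h1 : 1 ≤ j) (h2 : j < 2 ^ r) :
    Even (Nat.choose (k + j - 1) j) := by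
  obtain ⟨i, rfl⟩ : ∃ i, j = i + 1 := ⟨j - 1, by omega⟩
  have h := Nat.choose_succ_right_eq (k + i) i
  rw [Nat.add_sub_cancel] at h
  have e : k + (i + 1) - 1 = k + i := by omega
  rw [e]
  by_contra ho
  rw [Nat.not_even_iff_odd] at ho
  have hd : 2 ^ r ∣ (k + i).choose (i + 1) * (i + 1) := h ▸ Dvd.dvd.mul_left hk _
  have hc : Nat.Coprime (2 ^ r) ((k + i).choose (i + 1)) :=
    Nat.Coprime.pow_left _ (Nat.coprime_two_left.2 ho)
  exact absurd (Nat.le_of_dvd (by omega) (hc.dvd_of_dvd_mul_left hd)) (by omega)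

/-- Let `r > 0` and `k = 1 + ∑_{i=0}^{r-1} 2^i + ∑_{i=r+1}^{s} a_i 2^i` with each
`a_i ∈ {0, 1}`. Then `C(k + 2^r - 1, 2^r)` is odd, `C(k + j - 1, j)` is even for
`1 ≤ j < 2^r`, and for every `n` with `n - 2k < 2^r ≤ n` one has `N_F(n, 2k) = 2^r`. -/
theorem NF_power_of_two (r s : ℕ) (hr : 0 < r) (a : ℕ → ℕ)
    (ha : ∀ i, a i = 0 ∨ a i = 1) (k : ℕ)
    (hk : k = 1 + (∑ i ∈ Finset.range r, 2 ^ i) +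
        ∑ i ∈ Finset.Icc (r + 1) s, a i * 2 ^ i) :
    Odd (Nat.choose (k + 2 ^ r - 1) (2 ^ r)) ∧
    (∀ j, 1 ≤ j → j < 2 ^ r → Even (Nat.choose (k + j - 1) j)) ∧
    (∀ n : ℕ, n - 2 * k < 2 ^ r → 2 ^ r ≤ n → NF n k = 2 ^ r) := by
  obtain ⟨q, hq, hkq⟩ : ∃ q, Odd q ∧ k = 2 ^ r * q := by
    have hd : 2 ^ (r + 1) ∣ ∑ i ∈ Finset.Icc (r + 1) s, a i * 2 ^ i := by
      refine Finset.dvd_sum fun i hi => Dvd.dvd.mul_left (pow_dvd_pow 2 ?_) _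
      exact (Finset.mem_Icc.1 hi).1
    obtain ⟨m, hm⟩ := hd
    have hg : 1 + ∑ i ∈ Finset.range r, 2 ^ i = 2 ^ r := by
      clear hk hr
      induction r with
      | zero => simp
      | succ r ih => rw [Finset.sum_range_succ, ← add_assoc, Nat.geomSum_eq (le_refl 2)]
                     have : 0 < 2 ^ r := by positivity
                     rw [pow_succ]; omega
    refine ⟨2 * m + 1, ⟨m, rfl⟩, ?_⟩
    rw [hk, hg, hm]; ring
  have hodd : Odd (Nat.choose (k + 2 ^ r - 1) (2 ^ r)) := by
    rw [hkq]; exact odd_aux q hq r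
  have heven : ∀ j, 1 ≤ j → j < 2 ^ r → Even (Nat.choose (k + j - 1) j) :=
    fun j h1 h2 => even_aux r k j ⟨q, hkq⟩ h1 h2
  refine ⟨hodd, heven, fun n h1 h2 => ?_⟩
  have hmem : 2 ^ r ∈ {j : ℕ | n - 2 * k < j ∧ j ≤ n ∧ Odd (Nat.choose (k + j - 1) j)} :=
    ⟨h1, h2, hodd⟩
  apply le_antisymm
  · exact Nat.sInf_le hmem
  · obtain ⟨g1, g2, g3⟩ := Nat.sInf_mem ⟨_, hmem⟩
    by_contra hlt
    exact (Nat.not_even_iff_odd.2 g3) (heven _ (by omega) (not_le.1 hlt))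
end
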